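/- Let B be a standard Brownian motion on [0,T] with natural filtration (\mathcal{F}_t), and let \mathcal{G}_t = \mathcal{F}_t \vee \sigma(B_T) be the initially enlarged filtration. Then the process \tilde{B}_t := B_t - \int_0^t (B_T - B_s)/(T - s) ds, for 0 \leq t < T, is a (\mathcal{G}_t)-Brownian motion on [0, T). -/

import Mathlib

open MeasureTheory ProbabilityTheory

/-- `W` is a Brownian motion on the time set `S` with respect to the filtration `G`:
it starts at `0`, is adapted, has a.s. continuous paths on `S`, and for `s ≤ t` in `S`
the increment `W_t - W_s` is independent of `G_s` with law `N(0, t - s)`. -/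
def IsBrownianMotionOn {Ω : Type*} [MeasurableSpace Ω] (μ : Measure Ω)
    (G : ℝ → MeasurableSpace Ω) (W : ℝ → Ω → ℝ) (S : Set ℝ) : Prop :=
  (∀ᵐ ω ∂μ, W 0 ω = 0) ∧
  (∀ t ∈ S, Measurable[G t] (W t)) ∧
  (∀ᵐ ω ∂μ, ContinuousOn (fun t => W t ω) S) ∧
  ∀ s t : ℝ, s ∈ S → t ∈ S → s ≤ t →
    Indep (MeasurableSpace.comap (fun ω => W t ω - W s ω) inferInstance) (G s) μ ∧
    Measure.map (fun ω => W t ω - W s ω) μ = gaussianReal 0 (Real.toNNReal (t - s))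

open Filter Set
open scoped Topology BoundedContinuousFunction NNReal

/-!
Over a cell `[a, b]` with `b < T`, the increment `B_b - B_a` minus its regression
`(b - a) / (T - a) * (B_T - B_a)` on the terminal value is Gaussian of variance
`(b - a) * (T - b) / (T - a)`, independent of `ℱ_a` and uncorrelated with `B_T - B_a`, hence
independent of `ℱ_a ⊔ σ(B_T)`. Along a partition of `[s, t]` these residuals therefore add up to a
centred Gaussian independent of `ℱ_s ⊔ σ(B_T)`. As the mesh tends to `0`, the sums of the regression
terms are Riemann sums of the drift `∫ (B_T - B_u) / (T - u) du` and the variances add up to `t - s`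
in the limit; both the law and the independence survive the almost sure limit.
-/

section Independence

variable {Ω : Type*}

theorem sup_eq_generateFrom_image2_inter (m₁ m₂ : MeasurableSpace Ω) :
    m₁ ⊔ m₂ = MeasurableSpace.generateFrom
      (image2 (· ∩ ·) {s | MeasurableSet[m₁] s} {s | MeasurableSet[m₂] s}) := by
  refine le_antisymm (sup_le (fun s hs => ?_) (fun s hs => ?_))
    (MeasurableSpace.generateFrom_le ?_)
  · exact MeasurableSpace.measurableSet_generateFrom
      ⟨s, hs, univ, @MeasurableSet.univ _ m₂, inter_univ s⟩
  · exact MeasurableSpace.measurableSet_generateFrom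
      ⟨univ, @MeasurableSet.univ _ m₁, s, hs, univ_inter s⟩
  · rintro _ ⟨s, hs, t, ht, rfl⟩
    exact @MeasurableSet.inter _ (m₁ ⊔ m₂) _ _ ((le_sup_left : m₁ ≤ _) s hs)
      ((le_sup_right : m₂ ≤ _) t ht)

theorem isPiSystem_image2_inter {C D : Set (Set Ω)} (hC : IsPiSystem C) (hD : IsPiSystem D) :
    IsPiSystem (image2 (· ∩ ·) C D) := by
  rintro _ ⟨s, hs, t, ht, rfl⟩ _ ⟨s', hs', t', ht', rfl⟩ hne
  rw [inter_inter_inter_comm] at hne ⊢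
  exact mem_image2_of_mem (hC s hs s' hs' hne.left) (hD t ht t' ht' hne.right)

theorem indep_sup_right_of_indep_sup_left {m₁ m₂ m₃ mΩ : MeasurableSpace Ω} {μ : Measure Ω}
    [IsZeroOrProbabilityMeasure μ] (h₁ : m₁ ≤ mΩ) (h₂ : m₂ ≤ mΩ) (h₃ : m₃ ≤ mΩ)
    (h₁₂ : Indep m₁ m₂ μ) (h₁₂₃ : Indep (m₁ ⊔ m₂) m₃ μ) : Indep m₁ (m₂ ⊔ m₃) μ := by
  refine IndepSets.indep h₁ (sup_le h₂ h₃) (@MeasurableSpace.isPiSystem_measurableSet _ m₁)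
    (isPiSystem_image2_inter (@MeasurableSpace.isPiSystem_measurableSet _ m₂)
      (@MeasurableSpace.isPiSystem_measurableSet _ m₃))
    (@MeasurableSpace.generateFrom_measurableSet _ m₁).symm
    (sup_eq_generateFrom_image2_inter m₂ m₃) ?_
  rw [IndepSets_iff]
  rintro s _ hs ⟨t, ht, u, hu, rfl⟩
  rw [Indep_iff] at h₁₂ h₁₂₃
  have hs' : MeasurableSet[m₁ ⊔ m₂] s := (le_sup_left : m₁ ≤ m₁ ⊔ m₂) s hs
  have ht' : MeasurableSet[m₁ ⊔ m₂] t := (le_sup_right : m₂ ≤ m₁ ⊔ m₂) t ht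
  calc μ (s ∩ (t ∩ u)) = μ (s ∩ t ∩ u) := by rw [inter_assoc]
    _ = μ s * μ t * μ u := by
      rw [h₁₂₃ _ u (@MeasurableSet.inter _ (m₁ ⊔ m₂) _ _ hs' ht') hu, h₁₂ s t hs ht]
    _ = μ s * μ (t ∩ u) := by rw [h₁₂₃ t u ht' hu, mul_assoc]

theorem indep_comap_of_ae_tendsto {m mΩ : MeasurableSpace Ω} {μ : Measure Ω}
    [IsProbabilityMeasure μ] {E : Type*} [TopologicalSpace E] [HasOuterApproxClosed E]
    [MeasurableSpace E] [BorelSpace E] {ι : Type*} {l : Filter ι} [l.NeBot]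
    [l.IsCountablyGenerated] {X : ι → Ω → E} {Z : Ω → E} (hm : m ≤ mΩ)
    (hX : ∀ i, AEMeasurable (X i) μ) (hZ : AEMeasurable Z μ)
    (hind : ∀ i, Indep m (MeasurableSpace.comap (X i) inferInstance) μ)
    (hlim : ∀ᵐ ω ∂μ, Tendsto (fun i => X i ω) l (𝓝 (Z ω))) :
    Indep m (MeasurableSpace.comap Z inferInstance) μ := by
  refine indep_comap_of_bcf hm hZ fun A hA f => ?_
  have tendsto_integral (ν : Measure Ω) [IsFiniteMeasure ν] (hν : ν ≪ μ) :
      Tendsto (fun i => ∫ ω, f (X i ω) ∂ν) l (𝓝 (∫ ω, f (Z ω) ∂ν)) := by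
    refine tendsto_integral_filter_of_dominated_convergence (fun _ => ‖f‖)
      (.of_forall fun i => (f.continuous.measurable.comp_aemeasurable
        ((hX i).mono_ac hν)).aestronglyMeasurable)
      (.of_forall fun i => .of_forall fun ω => f.norm_coe_le_norm _) (integrable_const _) ?_
    filter_upwards [hν.ae_le hlim] with ω hω using (f.continuous.tendsto _).comp hω
  have factor (i : ι) : ∫ ω in A, f (X i ω) ∂μ = μ.real A * ∫ ω, f (X i ω) ∂μ :=
    (hind i).setIntegral_eq_mul hm (hX i) hA f.continuous.aestronglyMeasurable
  refine tendsto_nhds_unique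
    (tendsto_integral (μ.restrict A) Measure.restrict_le_self.absolutelyContinuous) ?_
  simp_rw [factor]
  exact (tendsto_integral μ .rfl).const_mul _

end Independence

section Gaussian

theorem continuous_gaussianReal :
    Continuous (Y := ProbabilityMeasure ℝ)
      fun p : ℝ × ℝ≥0 => ⟨gaussianReal p.1 p.2, inferInstance⟩ := by
  refine SeqContinuous.continuous (Y := ProbabilityMeasure ℝ) fun p p₀ hp => ?_
  refine ProbabilityMeasure.tendsto_of_tendsto_charFun fun ξ => ?_
  have hc : Continuous fun p : ℝ × ℝ≥0 =>
      Complex.exp (ξ * p.1 * Complex.I - p.2 * ξ ^ 2 / 2) := by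
    fun_prop
  rw [ProbabilityMeasure.coe_mk, charFun_gaussianReal]
  exact ((hc.tendsto p₀).comp hp).congr fun n => (charFun_gaussianReal ξ).symm

theorem map_eq_gaussianReal_of_ae_tendsto {Ω : Type*} {mΩ : MeasurableSpace Ω} {μ : Measure Ω}
    [IsProbabilityMeasure μ] {ι : Type*} {l : Filter ι} [l.NeBot] [l.IsCountablyGenerated]
    {X : ι → Ω → ℝ} {Z : Ω → ℝ} {m : ι → ℝ} {m₀ : ℝ} {v : ι → ℝ≥0} {v₀ : ℝ≥0}
    (hX : ∀ i, AEMeasurable (X i) μ) (hZ : AEMeasurable Z μ)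
    (hlaw : ∀ i, μ.map (X i) = gaussianReal (m i) (v i))
    (hm : Tendsto m l (𝓝 m₀)) (hv : Tendsto v l (𝓝 v₀))
    (hlim : ∀ᵐ ω ∂μ, Tendsto (fun i => X i ω) l (𝓝 (Z ω))) :
    μ.map Z = gaussianReal m₀ v₀ := by
  have tendsto_law := (tendstoInDistribution_of_ae_tendsto hX hZ hlim).tendsto
  have tendsto_gaussian := (continuous_gaussianReal.tendsto (m₀, v₀)).comp (hm.prodMk_nhds hv)
  exact congrArg ProbabilityMeasure.toMeasure (tendsto_nhds_unique tendsto_law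
    (tendsto_gaussian.congr fun i => Subtype.ext (hlaw i).symm))

theorem indepFun_sub_const_mul_of_covariance_eq {Ω : Type*} {mΩ : MeasurableSpace Ω}
    {μ : Measure Ω} {X W : Ω → ℝ} {c : ℝ} (h : HasGaussianLaw (fun ω => (X ω, W ω)) μ)
    (hc : cov[X, W; μ] = c * Var[W; μ]) : IndepFun (fun ω => X ω - c * W ω) W μ := by
  have := h.isProbabilityMeasure
  have hX : MemLp X 2 μ := h.fst.memLp_two
  have hW : MemLp W 2 μ := h.snd.memLp_two
  let L : ℝ × ℝ →L[ℝ] ℝ × ℝ :=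
    (.fst ℝ ℝ ℝ - c • .snd ℝ ℝ ℝ : ℝ × ℝ →L[ℝ] ℝ).prod (.snd ℝ ℝ ℝ)
  refine (h.map L).indepFun_of_covariance_eq_zero ?_
  change cov[X - c • W, W; μ] = 0
  rw [covariance_sub_left hX (hW.const_smul c) hW, covariance_smul_left,
    covariance_self hW.aemeasurable, hc, sub_self]

end Gaussian

/-- `X` is a centred Gaussian random variable of variance `v`, independent of the `σ`-algebra `𝓖`.
The variance is a real number; it is truncated at `0` to form the law. -/
structure IsIndepGaussian {Ω : Type*} (X : Ω → ℝ) (v : ℝ) (𝓖 : MeasurableSpace Ω)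
    {mΩ : MeasurableSpace Ω} (μ : Measure Ω) : Prop where
  measurable : Measurable X
  indep : Indep (MeasurableSpace.comap X inferInstance) 𝓖 μ
  map_eq : μ.map X = gaussianReal 0 v.toNNReal

namespace IsIndepGaussian

variable {Ω : Type*} {𝓖 𝓗 mΩ : MeasurableSpace Ω} {μ : Measure Ω} {X Y : Ω → ℝ} {v w : ℝ}

theorem zero [IsProbabilityMeasure μ] : IsIndepGaussian (fun _ => 0) 0 𝓖 μ where
  measurable := measurable_const
  indep := by
    rw [MeasurableSpace.comap_const]
    exact indep_bot_left _
  map_eq := by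
    rw [Measure.map_const, measure_univ, one_smul, Real.toNNReal_zero, gaussianReal_zero_var]

theorem mono (hX : IsIndepGaussian X v 𝓗 μ) (h : 𝓖 ≤ 𝓗) : IsIndepGaussian X v 𝓖 μ :=
  ⟨hX.measurable, indep_of_indep_of_le_right hX.indep h, hX.map_eq⟩

theorem hasLaw (hX : IsIndepGaussian X v 𝓖 μ) : HasLaw X (gaussianReal 0 v.toNNReal) μ :=
  ⟨hX.measurable.aemeasurable, hX.map_eq⟩

theorem hasGaussianLaw (hX : IsIndepGaussian X v 𝓖 μ) : HasGaussianLaw X μ :=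
  hX.hasLaw.hasGaussianLaw

theorem variance_eq (hX : IsIndepGaussian X v 𝓖 μ) (hv : 0 ≤ v) : Var[X; μ] = v := by
  rw [hX.hasLaw.variance_eq, variance_id_gaussianReal, Real.coe_toNNReal v hv]

theorem const_mul (hX : IsIndepGaussian X v 𝓖 μ) (c : ℝ) :
    IsIndepGaussian (fun ω => c * X ω) (c ^ 2 * v) 𝓖 μ where
  measurable := hX.measurable.const_mul c
  indep := indep_of_indep_of_le_left hX.indep ((comap_measurable X).const_mul c).comap_le
  map_eq := by
    rw [(gaussianReal_const_mul hX.hasLaw c).map_eq, mul_zero, Real.toNNReal_mul (sq_nonneg c),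
      Real.toNNReal_of_nonneg (sq_nonneg c)]

theorem indepFun (hY : IsIndepGaussian Y w 𝓖 μ) (hX : Measurable[𝓖] X) : IndepFun X Y μ :=
  (indep_of_indep_of_le_right hY.indep hX.comap_le).symm

theorem indep_sup_comap [IsProbabilityMeasure μ] (hX : IsIndepGaussian X v 𝓖 μ)
    (hY : IsIndepGaussian Y w 𝓗 μ) (hX𝓗 : Measurable[𝓗] X) (h𝓖𝓗 : 𝓖 ≤ 𝓗) (h𝓖 : 𝓖 ≤ mΩ) :
    Indep (MeasurableSpace.comap X inferInstance ⊔ MeasurableSpace.comap Y inferInstance) 𝓖 μ :=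
  (indep_sup_right_of_indep_sup_left h𝓖 hX.measurable.comap_le hY.measurable.comap_le
    hX.indep.symm
    (indep_of_indep_of_le_right hY.indep (sup_le h𝓖𝓗 hX𝓗.comap_le)).symm).symm

theorem add [IsProbabilityMeasure μ] (hX : IsIndepGaussian X v 𝓖 μ) (hY : IsIndepGaussian Y w 𝓗 μ)
    (hX𝓗 : Measurable[𝓗] X) (h𝓖𝓗 : 𝓖 ≤ 𝓗) (h𝓖 : 𝓖 ≤ mΩ) (hv : 0 ≤ v) (hw : 0 ≤ w) :
    IsIndepGaussian (fun ω => X ω + Y ω) (v + w) 𝓖 μ where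
  measurable := hX.measurable.add hY.measurable
  indep := by
    refine indep_of_indep_of_le_left (hX.indep_sup_comap hY hX𝓗 h𝓖𝓗 h𝓖) (Measurable.comap_le ?_)
    exact ((comap_measurable X).mono le_sup_left le_rfl).add
      ((comap_measurable Y).mono le_sup_right le_rfl)
  map_eq := by
    rw [Real.toNNReal_add hv hw, ← add_zero (0 : ℝ)]
    exact gaussianReal_add_gaussianReal_of_indepFun (hY.indepFun hX𝓗) hX.map_eq hY.map_eq

theorem sum_range [IsProbabilityMeasure μ] {ι : Type*} [Preorder ι] {𝒢 : Filtration ι mΩ}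
    {τ : ℕ → ι} (hτ : Monotone τ) {X : ℕ → Ω → ℝ} {v : ℕ → ℝ} {n : ℕ}
    (hX : ∀ k < n, IsIndepGaussian (X k) (v k) (𝒢 (τ k)) μ)
    (hX𝒢 : ∀ k < n, Measurable[𝒢 (τ (k + 1))] (X k)) (hv : ∀ k < n, 0 ≤ v k) :
    IsIndepGaussian (fun ω => ∑ k ∈ Finset.range n, X k ω) (∑ k ∈ Finset.range n, v k)
      (𝒢 (τ 0)) μ := by
  induction n with
  | zero => simpa only [Finset.range_zero, Finset.sum_empty] using zero
  | succ n ih =>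
    simp only [Finset.sum_range_succ]
    have sum_measurable : Measurable[𝒢 (τ n)] fun ω => ∑ k ∈ Finset.range n, X k ω :=
      Finset.measurable_fun_sum _ fun k hk =>
        (hX𝒢 k ((Finset.mem_range.1 hk).trans n.lt_succ_self)).mono
          (𝒢.mono (hτ (Finset.mem_range.1 hk))) le_rfl
    refine (ih (fun k hk => hX k (hk.trans n.lt_succ_self))
      (fun k hk => hX𝒢 k (hk.trans n.lt_succ_self))
      (fun k hk => hv k (hk.trans n.lt_succ_self))).add (hX n n.lt_succ_self) sum_measurable
      (𝒢.mono (hτ n.zero_le)) (𝒢.le _) (Finset.sum_nonneg fun k hk => ?_) (hv n n.lt_succ_self)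
    exact hv k ((Finset.mem_range.1 hk).trans n.lt_succ_self)

theorem of_tendsto [IsProbabilityMeasure μ] {ι : Type*} {l : Filter ι} [l.NeBot]
    [l.IsCountablyGenerated] {X : ι → Ω → ℝ} {Z : Ω → ℝ} {v : ι → ℝ} {v₀ : ℝ} (h𝓖 : 𝓖 ≤ mΩ)
    (hX : ∀ i, IsIndepGaussian (X i) (v i) 𝓖 μ) (hZ : Measurable Z)
    (hv : Tendsto v l (𝓝 v₀)) (hlim : ∀ᵐ ω ∂μ, Tendsto (fun i => X i ω) l (𝓝 (Z ω))) :
    IsIndepGaussian Z v₀ 𝓖 μ where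
  measurable := hZ
  indep := (indep_comap_of_ae_tendsto h𝓖 (fun i => (hX i).measurable.aemeasurable)
    hZ.aemeasurable (fun i => (hX i).indep.symm) hlim).symm
  map_eq := map_eq_gaussianReal_of_ae_tendsto (fun i => (hX i).measurable.aemeasurable)
    hZ.aemeasurable (fun i => (hX i).map_eq) tendsto_const_nhds
    ((continuous_real_toNNReal.tendsto v₀).comp hv) hlim

theorem indepFun_sub_mul_add [IsProbabilityMeasure μ] (hX : IsIndepGaussian X v 𝓖 μ)
    (hY : IsIndepGaussian Y w 𝓗 μ) (hX𝓗 : Measurable[𝓗] X) (hv : 0 ≤ v) (hw : 0 < w) :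
    IndepFun (fun ω => X ω - v / (v + w) * (X ω + Y ω)) (fun ω => X ω + Y ω) μ := by
  have hXY : IndepFun X Y μ := hY.indepFun hX𝓗
  have hX₂ : MemLp X 2 μ := hX.hasGaussianLaw.memLp_two
  have hY₂ : MemLp Y 2 μ := hY.hasGaussianLaw.memLp_two
  let L : ℝ × ℝ →L[ℝ] ℝ × ℝ := .prod (.fst ℝ ℝ ℝ) (.fst ℝ ℝ ℝ + .snd ℝ ℝ ℝ)
  have joint : HasGaussianLaw (fun ω => (X ω, X ω + Y ω)) μ :=
    (hXY.hasGaussianLaw hX.hasGaussianLaw hY.hasGaussianLaw).map L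
  refine indepFun_sub_const_mul_of_covariance_eq joint ?_
  change cov[X, X + Y; μ] = v / (v + w) * Var[X + Y; μ]
  rw [covariance_add_right hX₂ hX₂ hY₂, hXY.covariance_eq_zero hX₂ hY₂,
    covariance_self hX₂.aemeasurable, hXY.variance_add hX₂ hY₂, hX.variance_eq hv,
    hY.variance_eq hw.le, add_zero, div_mul_cancel₀ v (by positivity)]

-- The residual and `X + Y` are functions of `(X, Y)`, which is independent of `𝓖`, so independence
-- of the residual from `X + Y` extends to `𝓖 ⊔ σ(X + Y)`.
theorem bridge [IsProbabilityMeasure μ] (h𝓖 : 𝓖 ≤ mΩ) (hX : IsIndepGaussian X v 𝓖 μ)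
    (hY : IsIndepGaussian Y w (𝓖 ⊔ MeasurableSpace.comap X inferInstance) μ)
    (hv : 0 ≤ v) (hw : 0 < w) :
    IsIndepGaussian (fun ω => X ω - v / (v + w) * (X ω + Y ω)) (v * w / (v + w))
      (𝓖 ⊔ MeasurableSpace.comap (fun ω => X ω + Y ω) inferInstance) μ := by
  have hX' : Measurable[𝓖 ⊔ MeasurableSpace.comap X inferInstance] X :=
    (comap_measurable X).mono le_sup_right le_rfl
  have residual : IsIndepGaussian (fun ω => X ω - v / (v + w) * (X ω + Y ω)) (v * w / (v + w))
      𝓖 μ := by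
    convert (hX.const_mul (1 - v / (v + w))).add (hY.const_mul (-(v / (v + w))))
      (hX'.const_mul _) le_sup_left h𝓖 (by positivity) (by positivity) using 1
    · ext ω
      ring
    · field_simp
      ring
  refine ⟨residual.measurable, ?_, residual.map_eq⟩
  rw [sup_comm]
  refine indep_sup_right_of_indep_sup_left residual.measurable.comap_le
    (hX.measurable.add hY.measurable).comap_le h𝓖 (hX.indepFun_sub_mul_add hY hX' hv hw) ?_
  refine indep_of_indep_of_le_left (hX.indep_sup_comap hY hX' le_sup_left h𝓖) ?_
  have measurable_left : Measurable[MeasurableSpace.comap X inferInstance ⊔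
      MeasurableSpace.comap Y inferInstance] X := (comap_measurable X).mono le_sup_left le_rfl
  have measurable_sum := measurable_left.add ((comap_measurable Y).mono le_sup_right le_rfl)
  exact sup_le (measurable_left.sub (measurable_sum.const_mul _)).comap_le measurable_sum.comap_le

end IsIndepGaussian

section RiemannSum

variable {E : Type*} [NormedAddCommGroup E] [NormedSpace ℝ E] [CompleteSpace E] {g : ℝ → E}
  {s t : ℝ}

theorem norm_sum_smul_sub_integral_le {τ : ℕ → ℝ} {n : ℕ} {ε : ℝ} (hτ : Monotone τ)
    (hg : IntervalIntegrable g volume (τ 0) (τ n))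
    (hosc : ∀ k < n, ∀ u ∈ Icc (τ k) (τ (k + 1)), ‖g (τ k) - g u‖ ≤ ε) :
    ‖∑ k ∈ Finset.range n, (τ (k + 1) - τ k) • g (τ k) - ∫ u in τ 0..τ n, g u‖
      ≤ ε * (τ n - τ 0) := by
  have hgk (k : ℕ) (hk : k < n) : IntervalIntegrable g volume (τ k) (τ (k + 1)) := by
    refine hg.mono_set ?_
    rw [uIcc_of_le (hτ k.le_succ), uIcc_of_le (hτ n.zero_le)]
    exact Icc_subset_Icc (hτ k.zero_le) (hτ hk)
  have cell (k : ℕ) (hk : k ∈ Finset.range n) :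
      ‖(τ (k + 1) - τ k) • g (τ k) - ∫ u in τ k..τ (k + 1), g u‖ ≤ ε * (τ (k + 1) - τ k) := by
    have hkn := Finset.mem_range.1 hk
    rw [← intervalIntegral.integral_const, ← intervalIntegral.integral_sub
      intervalIntegrable_const (hgk k hkn), ← abs_of_nonneg (sub_nonneg.2 (hτ k.le_succ))]
    refine intervalIntegral.norm_integral_le_of_norm_le_const fun u hu => hosc k hkn u ?_
    rw [uIoc_of_le (hτ k.le_succ)] at hu
    exact Ioc_subset_Icc_self hu
  rw [← intervalIntegral.sum_integral_adjacent_intervals hgk, ← Finset.sum_sub_distrib,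
    ← Finset.sum_range_sub, Finset.mul_sum]
  exact norm_sum_le_of_le _ cell

/-- The points of the partition of `[s, t]` into `n + 1` cells of equal length (so that there is
always at least one cell); only the indices `k ≤ n + 1` give points of `[s, t]`. -/
noncomputable def equipartition (s t : ℝ) (n k : ℕ) : ℝ :=
  s + k * ((t - s) / (n + 1))

namespace equipartition

theorem apply_zero (s t : ℝ) (n : ℕ) : equipartition s t n 0 = s := by
  rw [equipartition, Nat.cast_zero, zero_mul, add_zero]

theorem apply_last (s t : ℝ) (n : ℕ) : equipartition s t n (n + 1) = t := by
  rw [equipartition, Nat.cast_succ, mul_div_cancel₀ _ n.cast_add_one_ne_zero, add_sub_cancel]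

theorem succ_sub (s t : ℝ) (n k : ℕ) :
    equipartition s t n (k + 1) - equipartition s t n k = (t - s) / (n + 1) := by
  rw [equipartition, equipartition, Nat.cast_succ]
  ring

theorem monotone (hst : s ≤ t) (n : ℕ) : Monotone (equipartition s t n) := by
  refine monotone_nat_of_le_succ fun k => ?_
  rw [← sub_nonneg, succ_sub]
  exact div_nonneg (sub_nonneg.2 hst) (by positivity)

theorem mem_Icc (hst : s ≤ t) {n k : ℕ} (hk : k ≤ n + 1) : equipartition s t n k ∈ Icc s t := by
  constructor
  · simpa only [apply_zero] using monotone hst n k.zero_le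
  · simpa only [apply_last] using monotone hst n hk

theorem tendsto_mesh (s t : ℝ) : Tendsto (fun n : ℕ => (t - s) / ((n : ℝ) + 1)) atTop (𝓝 0) :=
  tendsto_const_nhds.div_atTop (tendsto_natCast_atTop_atTop.atTop_add tendsto_const_nhds)

theorem tendsto_sum_smul (hst : s ≤ t) (hg : ContinuousOn g (Icc s t)) :
    Tendsto (fun n => ∑ k ∈ Finset.range (n + 1),
        (equipartition s t n (k + 1) - equipartition s t n k) • g (equipartition s t n k))
      atTop (𝓝 (∫ u in s..t, g u)) := by
  refine Metric.tendsto_nhds.2 fun ε hε => ?_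
  have hε' : 0 < ε / (t - s + 1) := div_pos hε (by linarith)
  obtain ⟨δ, hδ, hgδ⟩ := Metric.uniformContinuousOn_iff_le.1
    (isCompact_Icc.uniformContinuousOn_of_continuous hg) _ hε'
  filter_upwards [(tendsto_mesh s t).eventually_le_const hδ] with n hn
  have osc (k : ℕ) (hk : k < n + 1) (u : ℝ)
      (hu : u ∈ Icc (equipartition s t n k) (equipartition s t n (k + 1))) :
      ‖g (equipartition s t n k) - g u‖ ≤ ε / (t - s + 1) := by
    have huI : u ∈ Icc s t := ⟨(mem_Icc hst hk.le).1.trans hu.1, hu.2.trans (mem_Icc hst hk).2⟩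
    rw [← dist_eq_norm]
    refine hgδ _ (mem_Icc hst hk.le) u huI ?_
    rw [dist_comm, Real.dist_eq, abs_of_nonneg (sub_nonneg.2 hu.1)]
    linarith [hu.2, succ_sub s t n k]
  have hint : IntervalIntegrable g volume (equipartition s t n 0)
      (equipartition s t n (n + 1)) := by
    rw [apply_zero, apply_last]
    exact hg.intervalIntegrable_of_Icc hst
  have bound := norm_sum_smul_sub_integral_le (monotone hst n) hint osc
  rw [apply_zero, apply_last] at bound
  rw [dist_eq_norm]
  refine bound.trans_lt ?_
  rw [div_mul_eq_mul_div, div_lt_iff₀ (by linarith)]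
  linarith

end equipartition

end RiemannSum

section Path

/-- The path `b` on `[0, T)` with the drift of the Brownian bridge towards `b T` removed. -/
noncomputable def bridgeInnovation (b : ℝ → ℝ) (T t : ℝ) : ℝ :=
  b t - ∫ s in (0 : ℝ)..t, (b T - b s) / (T - s)

/-- The increment of `b` over `[s, t]` minus its linear interpolation on `[s, T]`; for a Brownian
path this is the residual of the regression of `b t - b s` on `b T - b s`. -/
noncomputable def bridgeResidual (b : ℝ → ℝ) (T s t : ℝ) : ℝ :=
  b t - b s - (t - s) / (T - s) * (b T - b s)

variable {b : ℝ → ℝ} {T s t : ℝ}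

theorem bridgeInnovation_zero (b : ℝ → ℝ) (T : ℝ) : bridgeInnovation b T 0 = b 0 := by
  rw [bridgeInnovation, intervalIntegral.integral_same, sub_zero]

theorem continuousOn_bridge_drift (hb : ContinuousOn b (Ico 0 T)) :
    ContinuousOn (fun s => (b T - b s) / (T - s)) (Ico 0 T) :=
  (continuousOn_const.sub hb).div (continuousOn_const.sub continuousOn_id)
    fun _ hs => (sub_pos.2 hs.2).ne'

theorem intervalIntegrable_bridge_drift (hb : ContinuousOn b (Ico 0 T)) (hs : s ∈ Ico 0 T)
    (ht : t ∈ Ico 0 T) : IntervalIntegrable (fun s => (b T - b s) / (T - s)) volume s t :=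
  ((continuousOn_bridge_drift hb).mono (ordConnected_Ico.uIcc_subset hs ht)).intervalIntegrable

theorem continuousOn_bridgeInnovation (hb : ContinuousOn b (Ico 0 T)) :
    ContinuousOn (bridgeInnovation b T) (Ico 0 T) := by
  refine hb.sub fun t ht => ?_
  obtain ⟨c, htc, hcT⟩ := exists_between ht.2
  have h0c : 0 ≤ c := ht.1.trans htc.le
  have primitive_continuousOn := intervalIntegral.continuousOn_primitive_interval'
    (intervalIntegrable_bridge_drift hb ⟨le_rfl, h0c.trans_lt hcT⟩ ⟨h0c, hcT⟩) left_mem_uIcc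
  rw [uIcc_of_le h0c] at primitive_continuousOn
  exact (primitive_continuousOn t ⟨ht.1, htc.le⟩).mono_of_mem_nhdsWithin
    (mem_nhdsWithin.2 ⟨Iio c, isOpen_Iio, htc, fun u hu => ⟨hu.2.1, hu.1.le⟩⟩)

theorem bridgeInnovation_sub (hb : ContinuousOn b (Ico 0 T)) (hs : s ∈ Ico 0 T)
    (ht : t ∈ Ico 0 T) :
    bridgeInnovation b T t - bridgeInnovation b T s
      = b t - b s - ∫ u in s..t, (b T - b u) / (T - u) := by
  have h0 : (0 : ℝ) ∈ Ico 0 T := ⟨le_rfl, hs.1.trans_lt hs.2⟩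
  rw [← intervalIntegral.integral_interval_sub_left (intervalIntegrable_bridge_drift hb h0 ht)
    (intervalIntegrable_bridge_drift hb h0 hs), bridgeInnovation, bridgeInnovation]
  ring

theorem tendsto_sum_bridgeResidual (hb : ContinuousOn b (Ico 0 T)) (hs : 0 ≤ s) (hst : s ≤ t)
    (htT : t < T) :
    Tendsto (fun n => ∑ k ∈ Finset.range (n + 1),
        bridgeResidual b T (equipartition s t n k) (equipartition s t n (k + 1)))
      atTop (𝓝 (bridgeInnovation b T t - bridgeInnovation b T s)) := by
  rw [bridgeInnovation_sub hb ⟨hs, hst.trans_lt htT⟩ ⟨hs.trans hst, htT⟩]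
  refine ((equipartition.tendsto_sum_smul hst ((continuousOn_bridge_drift hb).mono fun u hu =>
    ⟨hs.trans hu.1, hu.2.trans_lt htT⟩)).const_sub (b t - b s)).congr fun n => ?_
  have telescope := Finset.sum_range_sub (fun k => b (equipartition s t n k)) (n + 1)
  rw [equipartition.apply_zero, equipartition.apply_last] at telescope
  rw [← telescope, ← Finset.sum_sub_distrib]
  refine Finset.sum_congr rfl fun k _ => ?_
  rw [bridgeResidual, smul_eq_mul, div_mul_eq_mul_div, mul_div_assoc]

theorem tendsto_sum_bridge_variance (hst : s ≤ t) (htT : t < T) :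
    Tendsto (fun n => ∑ k ∈ Finset.range (n + 1),
        (equipartition s t n (k + 1) - equipartition s t n k)
          * (T - equipartition s t n (k + 1)) / (T - equipartition s t n k))
      atTop (𝓝 (t - s)) := by
  have hcont : ContinuousOn (fun u => (T - u)⁻¹) (Icc s t) :=
    (continuousOn_const.sub continuousOn_id).inv₀ fun u hu => (sub_pos.2 (hu.2.trans_lt htT)).ne'
  have hlim := ((equipartition.tendsto_mesh s t).mul
    (equipartition.tendsto_sum_smul hst hcont)).const_sub (t - s)
  rw [zero_mul, sub_zero] at hlim
  refine hlim.congr fun n => ?_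
  have telescope := Finset.sum_range_sub (equipartition s t n) (n + 1)
  rw [equipartition.apply_zero, equipartition.apply_last] at telescope
  rw [Finset.mul_sum, ← telescope, ← Finset.sum_sub_distrib]
  refine Finset.sum_congr rfl fun k hk => ?_
  have hpos : 0 < T - equipartition s t n k := by
    linarith [(equipartition.mem_Icc hst (Finset.mem_range.1 hk).le).2]
  rw [telescope, ← equipartition.succ_sub s t n k, smul_eq_mul]
  field_simp
  ring

end Path

section Enlargement

variable {Ω : Type*} {mΩ : MeasurableSpace Ω}

/-- The filtration `ℱ` initially enlarged by the random variable `Y`. -/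
def initialEnlargement {ι β : Type*} [Preorder ι] [MeasurableSpace β] (ℱ : Filtration ι mΩ)
    (Y : Ω → β) (hY : Measurable Y) : Filtration ι mΩ where
  seq t := ℱ t ⊔ MeasurableSpace.comap Y inferInstance
  mono' _ _ hst := sup_le_sup_right (ℱ.mono hst) _
  le' t := sup_le (ℱ.le t) hY.comap_le

namespace IsBrownianMotionOn

variable {μ : Measure Ω} {ℱ : Filtration ℝ mΩ} {B : ℝ → Ω → ℝ} {S : Set ℝ} {s t T : ℝ}

theorem measurable_of_le (hB : IsBrownianMotionOn μ ℱ B S) (hs : s ∈ S) (hst : s ≤ t) :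
    Measurable[ℱ t] (B s) :=
  (hB.2.1 s hs).mono (ℱ.mono hst) le_rfl

theorem measurable (hB : IsBrownianMotionOn μ ℱ B S) (ht : t ∈ S) : Measurable (B t) :=
  (hB.2.1 t ht).mono (ℱ.le t) le_rfl

theorem isIndepGaussian_sub (hB : IsBrownianMotionOn μ ℱ B S) (hs : s ∈ S) (ht : t ∈ S)
    (hst : s ≤ t) : IsIndepGaussian (fun ω => B t ω - B s ω) (t - s) (ℱ s) μ :=
  ⟨(hB.measurable ht).sub (hB.measurable hs), (hB.2.2.2 s t hs ht hst).1,
    (hB.2.2.2 s t hs ht hst).2⟩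

theorem measurable_bridgeResidual (hB : IsBrownianMotionOn μ ℱ B S) (hs : s ∈ S) (ht : t ∈ S)
    (hT : T ∈ S) (hst : s ≤ t) :
    Measurable[initialEnlargement ℱ (B T) (hB.measurable hT) t]
      fun ω => bridgeResidual (B · ω) T s t := by
  have hs' := (hB.measurable_of_le hs hst).mono
    (le_sup_left : _ ≤ initialEnlargement ℱ (B T) (hB.measurable hT) t) le_rfl
  have ht' := (hB.measurable_of_le ht le_rfl).mono
    (le_sup_left : _ ≤ initialEnlargement ℱ (B T) (hB.measurable hT) t) le_rfl
  have hT' := (comap_measurable (B T)).mono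
    (le_sup_right : _ ≤ initialEnlargement ℱ (B T) (hB.measurable hT) t) le_rfl
  exact (ht'.sub hs').sub ((hT'.sub hs').const_mul _)

theorem isIndepGaussian_bridgeResidual [IsProbabilityMeasure μ] (hB : IsBrownianMotionOn μ ℱ B S)
    (hs : s ∈ S) (ht : t ∈ S) (hT : T ∈ S) (hst : s ≤ t) (htT : t < T) :
    IsIndepGaussian (fun ω => bridgeResidual (B · ω) T s t) ((t - s) * (T - t) / (T - s))
      (initialEnlargement ℱ (B T) (hB.measurable hT) s) μ := by
  have first := hB.isIndepGaussian_sub hs ht hst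
  have second : IsIndepGaussian (fun ω => B T ω - B t ω) (T - t)
      (ℱ s ⊔ MeasurableSpace.comap (fun ω => B t ω - B s ω) inferInstance) μ :=
    (hB.isIndepGaussian_sub ht hT htT.le).mono (sup_le (ℱ.mono hst)
      ((hB.measurable_of_le ht le_rfl).sub (hB.measurable_of_le hs hst)).comap_le)
  have residual := first.bridge (ℱ.le s) second (sub_nonneg.2 hst) (sub_pos.2 htT)
  simp only [sub_add_sub_cancel'] at residual
  have terminal_measurable : Measurable[ℱ s ⊔ MeasurableSpace.comap (fun ω => B T ω - B s ω)
      inferInstance] (B T) := by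
    simpa only [Pi.add_def, sub_add_cancel] using ((comap_measurable fun ω => B T ω - B s ω).mono
      le_sup_right le_rfl).add ((hB.measurable_of_le hs le_rfl).mono le_sup_left le_rfl)
  exact residual.mono (sup_le le_sup_left terminal_measurable.comap_le)

theorem measurable_bridgeInnovation (hB : IsBrownianMotionOn μ ℱ B (Icc 0 T))
    (hcont : ∀ ω, ContinuousOn (B · ω) (Ico 0 T)) (ht : t ∈ Ico 0 T) (hT : T ∈ Icc 0 T) :
    Measurable[initialEnlargement ℱ (B T) (hB.measurable hT) t]
      fun ω => bridgeInnovation (B · ω) T t := by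
  have mem (n k : ℕ) (hk : k ≤ n + 1) : equipartition 0 t n k ∈ Icc 0 T :=
    Icc_subset_Icc_right ht.2.le (equipartition.mem_Icc ht.1 hk)
  have sum_measurable (n : ℕ) : Measurable[initialEnlargement ℱ (B T) (hB.measurable hT) t]
      fun ω => ∑ k ∈ Finset.range (n + 1), bridgeResidual (B · ω) T (equipartition 0 t n k)
        (equipartition 0 t n (k + 1)) := by
    refine Finset.measurable_fun_sum _ fun k hk => ?_
    have hkn := Finset.mem_range.1 hk
    exact (hB.measurable_bridgeResidual (mem n k hkn.le) (mem n (k + 1) hkn) hT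
      (equipartition.monotone ht.1 n k.le_succ)).mono
      (Filtration.mono _ (equipartition.mem_Icc ht.1 hkn).2) le_rfl
  have increment_measurable : Measurable[initialEnlargement ℱ (B T) (hB.measurable hT) t]
      fun ω => bridgeInnovation (B · ω) T t - bridgeInnovation (B · ω) T 0 :=
    @measurable_of_tendsto_metrizable _ _ (_) _ _ _ _ _ _ sum_measurable
      (tendsto_pi_nhds.2 fun ω => tendsto_sum_bridgeResidual (hcont ω) le_rfl ht.1 ht.2)
  simp only [bridgeInnovation_zero] at increment_measurable
  have start_measurable : Measurable[initialEnlargement ℱ (B T) (hB.measurable hT) t] (B 0) :=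
    (hB.measurable_of_le ⟨le_rfl, hT.1⟩ ht.1).mono le_sup_left le_rfl
  simpa only [Pi.add_def, sub_add_cancel] using increment_measurable.add start_measurable

theorem isIndepGaussian_bridgeInnovation_sub [IsProbabilityMeasure μ]
    (hB : IsBrownianMotionOn μ ℱ B (Icc 0 T)) (hcont : ∀ ω, ContinuousOn (B · ω) (Ico 0 T))
    (hs : s ∈ Ico 0 T) (ht : t ∈ Ico 0 T) (hT : T ∈ Icc 0 T) (hst : s ≤ t) :
    IsIndepGaussian (fun ω => bridgeInnovation (B · ω) T t - bridgeInnovation (B · ω) T s) (t - s)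
      (initialEnlargement ℱ (B T) (hB.measurable hT) s) μ := by
  set 𝒢 := initialEnlargement ℱ (B T) (hB.measurable hT)
  have mem (n k : ℕ) (hk : k ≤ n + 1) : equipartition s t n k ∈ Ico 0 T :=
    Icc_subset_Ico_right ht.2 (Icc_subset_Icc_left hs.1 (equipartition.mem_Icc hst hk))
  have sum_gaussian (n : ℕ) := IsIndepGaussian.sum_range (n := n + 1) (𝒢 := 𝒢)
    (equipartition.monotone hst n)
    (fun k hk => hB.isIndepGaussian_bridgeResidual (Ico_subset_Icc_self (mem n k hk.le))
      (Ico_subset_Icc_self (mem n (k + 1) hk)) hT (equipartition.monotone hst n k.le_succ)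
      (mem n (k + 1) hk).2)
    (fun k hk => hB.measurable_bridgeResidual (Ico_subset_Icc_self (mem n k hk.le))
      (Ico_subset_Icc_self (mem n (k + 1) hk)) hT (equipartition.monotone hst n k.le_succ))
    (fun k hk => div_nonneg (mul_nonneg (sub_nonneg.2 (equipartition.monotone hst n k.le_succ))
      (sub_nonneg.2 (mem n (k + 1) hk).2.le)) (sub_nonneg.2 (mem n k hk.le).2.le))
  simp only [equipartition.apply_zero] at sum_gaussian
  exact .of_tendsto (𝒢.le s) sum_gaussian
    (((hB.measurable_bridgeInnovation hcont ht hT).mono (𝒢.le t) le_rfl).sub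
      ((hB.measurable_bridgeInnovation hcont hs hT).mono (𝒢.le s) le_rfl))
    (tendsto_sum_bridge_variance hst ht.2)
    (.of_forall fun ω => tendsto_sum_bridgeResidual (hcont ω) hs.1 hst ht.2)

end IsBrownianMotionOn

/-- The filtration generated by the process `B` on the time set `[a, ∞)`. -/
def pastFiltration {ι β : Type*} [Preorder ι] [MeasurableSpace β] (a : ι) (B : ι → Ω → β)
    (hB : ∀ t, Measurable (B t)) : Filtration ι mΩ where
  seq t := ⨆ s ∈ Icc a t, MeasurableSpace.comap (B s) inferInstance
  mono' _ _ hst := biSup_mono fun _ hr => ⟨hr.1, hr.2.trans hst⟩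
  le' _ := iSup₂_le fun s _ => (hB s).comap_le

end Enlargement

theorem brownian_bridge_enlargement_general {Ω : Type*} {mΩ : MeasurableSpace Ω} {μ : Measure Ω}
    [IsProbabilityMeasure μ] {ℱ : Filtration ℝ mΩ} {B : ℝ → Ω → ℝ} {T : ℝ}
    (hB : IsBrownianMotionOn μ ℱ B (Icc 0 T)) (hcont : ∀ ω, ContinuousOn (B · ω) (Ico 0 T)) :
    IsBrownianMotionOn μ (fun t => ℱ t ⊔ MeasurableSpace.comap (B T) inferInstance)
      (fun t ω => B t ω - ∫ s in (0 : ℝ)..t, (B T ω - B s ω) / (T - s)) (Ico 0 T) := by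
  have hT {t : ℝ} (ht : t ∈ Ico 0 T) : T ∈ Icc 0 T := ⟨ht.1.trans ht.2.le, le_rfl⟩
  refine ⟨?_, fun t ht => hB.measurable_bridgeInnovation hcont ht (hT ht),
    .of_forall fun ω => continuousOn_bridgeInnovation (hcont ω), fun s t hs ht hst => ?_⟩
  · filter_upwards [hB.1] with ω hω
    exact (bridgeInnovation_zero (B · ω) T).trans hω
  · have increment := hB.isIndepGaussian_bridgeInnovation_sub hcont hs ht (hT ht) hst
    exact ⟨increment.indep, increment.map_eq⟩

/-- Brownian bridge decomposition under initial enlargement by the terminal value: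
if `B` is a standard Brownian motion on `[0,T]` with natural filtration `ℱ`, and
`𝒢_t = ℱ_t ⊔ σ(B_T)` is the initially enlarged filtration, then
`B̃_t = B_t - ∫₀ᵗ (B_T - B_s)/(T - s) ds` is a `𝒢`-Brownian motion on `[0, T)`. -/
theorem brownian_bridge_enlargement {Ω : Type*} [MeasurableSpace Ω]
    (μ : Measure Ω) [IsProbabilityMeasure μ]
    (B : ℝ → Ω → ℝ)
    (hBmeas : ∀ t, Measurable (B t))
    (hB0 : ∀ ω, B 0 ω = 0)
    (hBcont : ∀ ω, Continuous fun t => B t ω)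
    (ℱ : ℝ → MeasurableSpace Ω)
    (hℱ : ∀ t, ℱ t = ⨆ s ∈ Set.Icc (0:ℝ) t, MeasurableSpace.comap (B s) inferInstance)
    (hℱle : ∀ t, ℱ t ≤ ‹MeasurableSpace Ω›)
    (hindep : ∀ s t : ℝ, 0 ≤ s → s ≤ t →
      Indep (MeasurableSpace.comap (fun ω => B t ω - B s ω) inferInstance) (ℱ s) μ)
    (hgauss : ∀ s t : ℝ, 0 ≤ s → s ≤ t →
      Measure.map (fun ω => B t ω - B s ω) μ = gaussianReal 0 (Real.toNNReal (t - s)))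
    (T : ℝ) (hT : 0 < T)
    (𝒢 : ℝ → MeasurableSpace Ω)
    (h𝒢 : ∀ t, 𝒢 t = ℱ t ⊔ MeasurableSpace.comap (B T) inferInstance)
    (Btilde : ℝ → Ω → ℝ)
    (hBtilde : ∀ t ω, Btilde t ω
      = B t ω - ∫ s in (0:ℝ)..t, (B T ω - B s ω) / (T - s)) :
    IsBrownianMotionOn μ 𝒢 Btilde (Set.Ico 0 T) := by
  obtain rfl : 𝒢 = fun t => ℱ t ⊔ MeasurableSpace.comap (B T) inferInstance := funext h𝒢
  obtain rfl : Btilde = fun t ω => B t ω - ∫ s in (0 : ℝ)..t, (B T ω - B s ω) / (T - s) :=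
    funext₂ hBtilde
  obtain rfl : ℱ = pastFiltration 0 B hBmeas := funext hℱ
  refine brownian_bridge_enlargement_general ⟨.of_forall hB0, fun t ht => ?_,
    .of_forall fun ω => (hBcont ω).continuousOn,
    fun s t hs _ hst => ⟨hindep s t hs.1 hst, hgauss s t hs.1 hst⟩⟩
    fun ω => (hBcont ω).continuousOn
  exact (comap_measurable (B t)).mono (le_iSup₂_of_le t ⟨ht.1, le_rfl⟩ le_rfl) le_rfl
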